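/- arXiv:1009.5092 — 3 statements merged into one kernel-verified Lean document; each statement's English description precedes it below -/
import Mathlib

section
/- Let A, B be rational numbers with B ≠ 0, and let G : ℤ → ℚ satisfy G_{n+2} = A·G_{n+1} + B·G_n for all n ∈ ℤ. Then G_1² = A·G_1·G_0 + B·G_0² if and only if there exist g, μ ∈ ℚ with μ ≠ 0 such that G_n = g·μⁿ for all n ∈ ℤ. -/
/-!
A two-sided sequence satisfying a binary recurrence with `B ≠ 0` is determined by its values at
`0` and `1`. A nonzero sequence `n ↦ g * μ ^ n` satisfies the recurrence exactly when `μ` is a root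
of the characteristic polynomial `X ^ 2 - A * X - B`. The condition on `G 0` and `G 1` is this
equation for `μ = G 1 / G 0`, homogenized.
-/

/-- `G` satisfies the binary recurrence with parameters `A` and `B`. The sequence is indexed by `ℤ`,
so the recurrence also constrains terms of negative index. The condition `B ≠ 0` is not part of the
definition. -/
def IsBinaryRecurrence {R : Type*} [Semiring R] (A B : R) (G : ℤ → R) : Prop :=
  ∀ n : ℤ, G (n + 2) = A * G (n + 1) + B * G n

namespace IsBinaryRecurrence

theorem ext {R : Type*} [Ring R] {A B : R} {G H : ℤ → R} (hB : IsLeftRegular B)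
    (hG : IsBinaryRecurrence A B G) (hH : IsBinaryRecurrence A B H)
    (h_zero : G 0 = H 0) (h_one : G 1 = H 1) : G = H := by
  suffices h : ∀ n : ℤ, G n = H n ∧ G (n + 1) = H (n + 1) from funext fun n ↦ (h n).1
  intro n
  induction n using Int.induction_on with
  | zero => exact ⟨h_zero, h_one⟩
  | succ k ih =>
    refine ⟨ih.2, ?_⟩
    rw [add_assoc, one_add_one_eq_two, hG, hH, ih.1, ih.2]
  | pred k ih =>
    have hG' := hG (-k - 1)
    have hH' := hH (-k - 1)
    rw [show (-k - 1 + 2 : ℤ) = -k + 1 by ring, sub_add_cancel] at hG' hH'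
    rw [sub_add_cancel]
    refine ⟨hB (add_left_cancel (a := A * G (-k)) ?_), ih.1⟩
    calc A * G (-k) + B * G (-k - 1) = G (-k + 1) := hG'.symm
      _ = H (-k + 1) := ih.2
      _ = A * G (-k) + B * H (-k - 1) := by rw [hH', ih.1]

end IsBinaryRecurrence

section Field

variable {K : Type*} [Field K] {A B : K}

theorem isBinaryRecurrence_mul_zpow_iff {g μ : K} (hμ : μ ≠ 0) :
    IsBinaryRecurrence A B (fun n ↦ g * μ ^ n) ↔ g * μ ^ 2 = g * (A * μ + B) := by
  have zpow_add_two (n : ℤ) : μ ^ (n + 2) = μ ^ n * μ ^ 2 := by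
    rw [zpow_add₀ hμ, zpow_ofNat]
  simp only [IsBinaryRecurrence, zpow_add_two, zpow_add_one₀ hμ]
  constructor
  · intro h
    have h_zero := h 0
    rw [zpow_zero] at h_zero
    linear_combination h_zero
  · intro h n
    linear_combination μ ^ n * h

theorem exists_ne_zero_eq_mul_of_sq_eq {x y : K} (hB : B ≠ 0)
    (h : y ^ 2 = A * y * x + B * x ^ 2) :
    ∃ μ : K, μ ≠ 0 ∧ y = x * μ ∧ x * μ ^ 2 = x * (A * μ + B) := by
  by_cases hx : x = 0
  · have hy : y = 0 := by simpa [hx] using h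
    exact ⟨1, one_ne_zero, by simp [hx, hy], by simp [hx]⟩
  · have hy : y ≠ 0 := by
      rintro rfl
      simp [hB, hx] at h
    refine ⟨y / x, div_ne_zero hy hx, (mul_div_cancel₀ y hx).symm, ?_⟩
    field_simp
    linear_combination h

theorem geometric_iff_general {G : ℤ → K} (hB : B ≠ 0) (hG : IsBinaryRecurrence A B G) :
    G 1 ^ 2 = A * G 1 * G 0 + B * G 0 ^ 2 ↔
      ∃ g μ : K, μ ≠ 0 ∧ ∀ n : ℤ, G n = g * μ ^ n := by
  constructor
  · intro h
    obtain ⟨μ, hμ, h_one, h_root⟩ := exists_ne_zero_eq_mul_of_sq_eq hB h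
    have h_geom := (isBinaryRecurrence_mul_zpow_iff hμ).mpr h_root
    have h_eq := hG.ext (IsRegular.of_ne_zero hB).left h_geom (by simp) (by simpa using h_one)
    exact ⟨G 0, μ, hμ, congrFun h_eq⟩
  · rintro ⟨g, μ, hμ, h⟩
    obtain rfl : G = fun n ↦ g * μ ^ n := funext h
    have h_root := (isBinaryRecurrence_mul_zpow_iff hμ).mp hG
    simp only [zpow_zero, zpow_one]
    linear_combination g * h_root

end Field

/-- An extended binary recurrence sequence `G` with parameters `A`, `B` (`B ≠ 0`) is
geometric, i.e. of the form `n ↦ g·μⁿ` with `μ ≠ 0`, if and only if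
`G₁² = A·G₁·G₀ + B·G₀²`. -/
theorem geometric_iff
    (A B : ℚ) (hB : B ≠ 0) (G : ℤ → ℚ)
    (hG : ∀ n : ℤ, G (n + 2) = A * G (n + 1) + B * G n) :
    (G 1) ^ 2 = A * G 1 * G 0 + B * (G 0) ^ 2 ↔
      ∃ g μ : ℚ, μ ≠ 0 ∧ ∀ n : ℤ, G n = g * μ ^ n :=
  geometric_iff_general hB hG
end

section
/- Let p be an odd prime and r ≥ 1 an integer. Let λ₁, λ₂ be nonzero integers such that for all integers i, j, if λ₁^i·λ₂^j is the p-th power of a rational number then p divides i and p divides j. Let ζ ∈ ℂ be a primitive p^r-th root of unity and let α₁, α₂ ∈ ℂ be roots of X^{p^r} - λ₁ and X^{p^r} - λ₂ respectively. Then the intersection of the fields ℚ(ζ, α₁) and ℚ(ζ, α₂) (as subfields of ℂ) equals ℚ(ζ). -/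
/-!
Let `K = ℚ(ζ)`. As `K/ℚ` is abelian and `ℚ` contains no nontrivial `p`-th root of unity, a rational
number that becomes a `p`-th power in `K` already is one in `ℚ`: otherwise a `p`-th root `x` of it
generates a normal extension of degree `p`, which contains a primitive `p`-th root of unity, whose
degree is at most `p - 1` and divides `p`. So `λ₁` and `λ₂` remain independent modulo `p`-th powers
in `K`. By Kummer theory, if `λ₁` were a `p`-th power in `K(α₂)`, then `λ₁ λ₂ ^ j` would be a `p`-th
power in `K` for some `j`. Hence `X ^ (p ^ r) - λ₁` is irreducible over `K(α₂)`, that is, `K(α₁)`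
and `K(α₂)` are linearly disjoint over `K`.
-/

open Polynomial IntermediateField Module

section AbelianDescent

variable {k K : Type*} [Field k] [Field K] [Algebra k K]

lemma finrank_adjoin_le_totient {n : ℕ} (hn : 0 < n) {ω : K} (hω : IsPrimitiveRoot ω n) :
    finrank k k⟮ω⟯ ≤ n.totient := by
  have hroot : aeval ω (cyclotomic n k) = 0 := by
    rw [aeval_def, eval₂_eq_eval_map, map_cyclotomic]
    exact hω.isRoot_cyclotomic hn
  calc finrank k k⟮ω⟯ = (minpoly k ω).natDegree := adjoin.finrank (hω.isIntegral hn).tower_top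
    _ ≤ (cyclotomic n k).natDegree :=
      natDegree_le_of_dvd (minpoly.dvd k ω hroot) (cyclotomic_ne_zero n k)
    _ = n.totient := natDegree_cyclotomic n k

lemma mem_bot_of_mem_adjoin_of_finrank_eq_prime {p : ℕ} (hp : p.Prime) {x ω : K}
    (hx : finrank k k⟮x⟯ = p) (hω : IsPrimitiveRoot ω p) (hωx : ω ∈ k⟮x⟯) :
    ω ∈ (⊥ : IntermediateField k K) := by
  have hdvd : finrank k k⟮ω⟯ ∣ p := hx ▸ finrank_dvd_of_le_right (adjoin_simple_le_iff.2 hωx)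
  have hlt : finrank k k⟮ω⟯ < p :=
    (finrank_adjoin_le_totient hp.pos hω).trans_lt (Nat.totient_lt p hp.one_lt)
  exact finrank_adjoin_simple_eq_one_iff.1 (((Nat.dvd_prime hp).1 hdvd).resolve_right hlt.ne)

lemma apply_mem_adjoin_simple [IsAbelianGalois k K] (σ : Gal(K/k)) (x : K) : σ x ∈ k⟮x⟯ :=
  normal_iff_forall_map_le'.1 inferInstance σ ⟨x, mem_adjoin_simple_self k x, rfl⟩

lemma exists_isPrimitiveRoot_mem_adjoin_of_pow_eq [IsAbelianGalois k K] {p : ℕ} (hp : p.Prime)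
    {a : k} {x : K} (hx : x ^ p = algebraMap k K a) (hxk : x ∉ (⊥ : IntermediateField k K)) :
    ∃ ω ∈ k⟮x⟯, IsPrimitiveRoot ω p := by
  obtain ⟨σ, hσ⟩ : ∃ σ : Gal(K/k), σ x ≠ x := by
    simpa only [InfiniteGalois.mem_bot_iff_fixed, not_forall] using hxk
  have hx0 : x ≠ 0 := fun h ↦ hxk (h ▸ zero_mem _)
  have hpow : (σ x / x) ^ p = 1 := by
    rw [div_pow, ← map_pow, hx, AlgEquiv.commutes, ← hx, div_self (pow_ne_zero p hx0)]
  have : Fact p.Prime := ⟨hp⟩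
  exact ⟨σ x / x, div_mem (apply_mem_adjoin_simple σ x) (mem_adjoin_simple_self k x),
    IsPrimitiveRoot.iff_orderOf.2 (orderOf_eq_prime hpow fun h ↦ hσ ((div_eq_one_iff_eq hx0).1 h))⟩

theorem exists_pow_eq_of_pow_eq_algebraMap [IsAbelianGalois k K] {p : ℕ} (hp : p.Prime)
    (hk : ∀ ω : k, ω ^ p = 1 → ω = 1) {a : k} {x : K} (hx : x ^ p = algebraMap k K a) :
    ∃ q : k, q ^ p = a := by
  by_contra! ha
  have hdeg : finrank k k⟮x⟯ = p := by
    have hmin : X ^ p - C a = minpoly k x := minpoly.eq_of_irreducible_of_monic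
      (X_pow_sub_C_irreducible_of_prime hp ha) (by simp [hx]) (monic_X_pow_sub_C a hp.ne_zero)
    rw [adjoin.finrank (.of_pow hp.pos (hx ▸ isIntegral_algebraMap)), ← hmin, natDegree_X_pow_sub_C]
  have hxk : x ∉ (⊥ : IntermediateField k K) := fun h ↦
    hp.ne_one (hdeg.symm.trans (finrank_adjoin_simple_eq_one_iff.2 h))
  obtain ⟨ω, hωx, hω⟩ := exists_isPrimitiveRoot_mem_adjoin_of_pow_eq hp hx hxk
  obtain ⟨c, rfl⟩ := mem_bot.1 (mem_bot_of_mem_adjoin_of_finrank_eq_prime hp hdeg hω hωx)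
  have hc : IsPrimitiveRoot c p := hω.of_map_of_injective (algebraMap k K).injective
  exact hc.ne_one hp.one_lt (hk c hc.pow_eq_one)

lemma isAbelianGalois_adjoin_of_isPrimitiveRoot {n : ℕ} [NeZero n] {ζ : K}
    (hζ : IsPrimitiveRoot ζ n) : IsAbelianGalois k k⟮ζ⟯ := by
  have hint : IsIntegral k ζ := (hζ.isIntegral (NeZero.pos n)).tower_top
  have : IsCyclotomicExtension {n} k k⟮ζ⟯ := by
    change IsCyclotomicExtension {n} k k⟮ζ⟯.toSubalgebra
    rw [adjoin_simple_toSubalgebra_of_isAlgebraic hint.isAlgebraic]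
    exact hζ.adjoin_isCyclotomicExtension k
  exact IsCyclotomicExtension.isAbelianGalois {n} k k⟮ζ⟯

end AbelianDescent

section Kummer

variable {K L : Type*} [Field K] [Field L] [Algebra K L] {n : ℕ} {a : K} {ζ : K} {α : L}

lemma isSplittingField_adjoin_simple_X_pow_sub_C (hn : 0 < n) (hζ : IsPrimitiveRoot ζ n)
    (hα : α ^ n = algebraMap K L a) : IsSplittingField K K⟮α⟯ (X ^ n - C a) := by
  have hgen : AdjoinSimple.gen K α ^ n = algebraMap K K⟮α⟯ a := Subtype.ext hα
  refine isSplittingField_iff_intermediateField.2 ⟨?_, ?_⟩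
  · simpa using X_pow_sub_C_splits_of_isPrimitiveRoot
      (hζ.map_of_injective (algebraMap K K⟮α⟯).injective) hgen
  · have hmem : AdjoinSimple.gen K α ∈ (X ^ n - C a).rootSet K⟮α⟯ := by
      simp [mem_rootSet_of_ne (X_pow_sub_C_ne_zero hn a), hgen]
    have htop : K⟮AdjoinSimple.gen K α⟯ = ⊤ := by
      apply lift_injective
      rw [lift_adjoin_simple, lift_top, AdjoinSimple.coe_gen]
    exact top_le_iff.1 (htop ▸ adjoin.mono K _ _ (Set.singleton_subset_iff.2 hmem))

lemma mem_bot_of_generator_fixes [IsGalois K L] {σ : Gal(L/K)}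
    (hσ : ∀ τ, τ ∈ Subgroup.zpowers σ) {x : L} (hx : σ x = x) :
    x ∈ (⊥ : IntermediateField K L) := by
  have hle : Subgroup.zpowers σ ≤ MulAction.stabilizer Gal(L/K) x := Subgroup.zpowers_le.2 hx
  exact (InfiniteGalois.mem_bot_iff_fixed x).2 fun τ ↦ hle (hσ τ)

variable [NeZero n] [IsSplittingField K L (X ^ n - C a)]

lemma exists_generator_apply_root_eq_mul (H : Irreducible (X ^ n - C a))
    (hζ : IsPrimitiveRoot ζ n) (hα : α ^ n = algebraMap K L a) :
    ∃ σ : Gal(L/K), (∀ τ, τ ∈ Subgroup.zpowers σ) ∧ σ α = algebraMap K L ζ * α := by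
  let e := autEquivZmod H L hζ
  refine ⟨e.symm (.ofAdd ((1 : ℕ) : ZMod n)), fun τ ↦ ?_, ?_⟩
  · obtain ⟨z, rfl⟩ := e.symm.surjective τ
    refine ⟨z.toAdd.cast, ?_⟩
    simp [← map_zpow, ← ofAdd_zsmul]
  · rw [autEquivZmod_symm_apply_natCast H L hα hζ, pow_one, Algebra.smul_def]

theorem exists_pow_eq_mul_pow_of_pow_eq_algebraMap {m : ℕ} (hmn : m ∣ n)
    (H : Irreducible (X ^ n - C a)) (hζ : IsPrimitiveRoot ζ n) (hα : α ^ n = algebraMap K L a)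
    {b : K} {β : L} (hβ : β ^ m = algebraMap K L b) : ∃ (c : K) (j : ℕ), c ^ m = b * a ^ j := by
  obtain ⟨d, rfl⟩ := hmn
  have hmd : 0 < m * d := NeZero.pos _
  have hm : 0 < m := Nat.pos_of_mul_pos_right hmd
  have : IsGalois K L := isGalois_of_isSplittingField_X_pow_sub_C
    ⟨ζ, (mem_primitiveRoots hmd).2 hζ⟩ H L
  obtain ⟨σ, hgen, hσα⟩ := exists_generator_apply_root_eq_mul H hζ hα
  set ω : L := algebraMap K L ζ ^ d
  have hω : IsPrimitiveRoot ω m :=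
    (hζ.map_of_injective (algebraMap K L).injective).pow hmd (mul_comm m d)
  obtain ⟨i, hi, hσβ⟩ : ∃ i < m, ω ^ i * β = σ β := by
    have hmem : σ β ∈ nthRoots m (algebraMap K L b) := by
      rw [mem_nthRoots hm, ← map_pow, hβ, AlgEquiv.commutes]
    simpa [hω.nthRoots_eq hβ] using hmem
  have hfix : σ (β * (α ^ d) ^ (m - i)) = β * (α ^ d) ^ (m - i) := by
    calc σ (β * (α ^ d) ^ (m - i)) = ω ^ i * β * (ω * α ^ d) ^ (m - i) := by
          rw [map_mul, map_pow, map_pow, hσα, mul_pow, hσβ]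
      _ = ω ^ (i + (m - i)) * (β * (α ^ d) ^ (m - i)) := by rw [mul_pow, pow_add]; ring
      _ = β * (α ^ d) ^ (m - i) := by
          rw [Nat.add_sub_cancel' hi.le, hω.pow_eq_one, one_mul]
  obtain ⟨c, hc⟩ := mem_bot.1 (mem_bot_of_generator_fixes hgen hfix)
  refine ⟨c, m - i, (algebraMap K L).injective ?_⟩
  rw [map_mul, map_pow, map_pow, hc, ← hα, ← hβ]
  ring

end Kummer

section LinearDisjoint

variable {K E : Type*} [Field K] [Field E] [Algebra K E] {α : E}

lemma linearDisjoint_adjoin_simple_of_natDegree_minpoly_eq {M : IntermediateField K E}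
    (hα : IsIntegral K α) (hdeg : (minpoly M α).natDegree = (minpoly K α).natDegree) :
    K⟮α⟯.LinearDisjoint M := by
  refine .of_basis_left (adjoin.powerBasis hα).basis ?_
  have hdim : (adjoin.powerBasis hα).dim = (minpoly M α).natDegree :=
    (adjoin.powerBasis_dim hα).trans hdeg.symm
  have hbasis : K⟮α⟯.val ∘ (adjoin.powerBasis hα).basis =
      (fun i : Fin (minpoly M α).natDegree ↦ α ^ (i : ℕ)) ∘ Fin.cast hdim := by
    ext i
    simp [adjoin.powerBasis_gen]
  rw [hbasis]
  exact (linearIndependent_pow α).comp _ (Fin.cast_injective _)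

lemma linearDisjoint_adjoin_simple_of_irreducible_X_pow_sub_C {M : IntermediateField K E} {n : ℕ}
    {a : K} (hα : α ^ n = algebraMap K E a) (H : Irreducible (X ^ n - C (algebraMap K M a))) :
    K⟮α⟯.LinearDisjoint M := by
  have hn : n ≠ 0 := ne_zero_of_irreducible_X_pow_sub_C H
  have hK : Irreducible (X ^ n - C a) := by
    refine (monic_X_pow_sub_C a hn).irreducible_of_irreducible_map (algebraMap K M) _ ?_
    simpa using H
  have hminK : X ^ n - C a = minpoly K α :=
    minpoly.eq_of_irreducible_of_monic hK (by simp [hα]) (monic_X_pow_sub_C a hn)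
  have hminM : X ^ n - C (algebraMap K M a) = minpoly M α :=
    minpoly.eq_of_irreducible_of_monic H
      (by simp [hα, ← IsScalarTower.algebraMap_apply]) (monic_X_pow_sub_C _ hn)
  apply linearDisjoint_adjoin_simple_of_natDegree_minpoly_eq
  · exact .of_pow (Nat.pos_of_ne_zero hn) (hα ▸ isIntegral_algebraMap)
  · rw [← hminK, ← hminM, natDegree_X_pow_sub_C, natDegree_X_pow_sub_C]

end LinearDisjoint

/-- Multiplicative independence of `a` and `b` modulo `p`-th powers. For prime `p` and nonzero
`a` and `b` it says that their classes in the `𝔽_p`-vector space `Kˣ / (Kˣ) ^ p` are linearly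
independent; it fails for `a = 0` and for `b = 0`, because `0` is a `p`-th power. -/
def IndepModPow {K : Type*} [Field K] (p : ℕ) (a b : K) : Prop :=
  ∀ i j : ℤ, (∃ q : K, q ^ p = a ^ i * b ^ j) → (p : ℤ) ∣ i ∧ (p : ℤ) ∣ j

namespace IndepModPow

variable {K : Type*} [Field K] {p : ℕ} {a b : K}

lemma symm (h : IndepModPow p a b) : IndepModPow p b a := fun i j ⟨q, hq⟩ ↦
  (h j i ⟨q, hq.trans (mul_comm _ _)⟩).symm

lemma pow_ne_mul_pow (h : IndepModPow p a b) (hp : p ≠ 1) (c : K) (j : ℕ) :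
    c ^ p ≠ a * b ^ j := fun hc ↦
  hp <| Nat.dvd_one.1 <| by exact_mod_cast (h 1 j ⟨c, by simpa using hc⟩).1

lemma pow_ne_left (h : IndepModPow p a b) (hp : p ≠ 1) (c : K) : c ^ p ≠ a := by
  simpa using h.pow_ne_mul_pow hp c 0

lemma map_algebraMap {L : Type*} [Field L] [Algebra K L] [IsAbelianGalois K L] (hp : p.Prime)
    (hK : ∀ ω : K, ω ^ p = 1 → ω = 1) (h : IndepModPow p a b) :
    IndepModPow p (algebraMap K L a) (algebraMap K L b) := fun i j ⟨x, hx⟩ ↦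
  h i j (exists_pow_eq_of_pow_eq_algebraMap hp hK (hx.trans (by simp)))

end IndepModPow

theorem adjoin_root_inf_adjoin_root_eq_bot {K E : Type*} [Field K] [Field E] [Algebra K E] {n : ℕ}
    (hn : Odd n) {a b ζ : K} (hζ : IsPrimitiveRoot ζ n)
    (hind : ∀ p, p.Prime → p ∣ n → IndepModPow p a b) {α β : E}
    (hα : α ^ n = algebraMap K E a) (hβ : β ^ n = algebraMap K E b) : K⟮α⟯ ⊓ K⟮β⟯ = ⊥ := by
  have : NeZero n := ⟨hn.pos.ne'⟩
  have hirr : Irreducible (X ^ n - C b) := X_pow_sub_C_irreducible_of_odd hn fun p hp hpn ↦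
    (hind p hp hpn).symm.pow_ne_left hp.ne_one
  have := isSplittingField_adjoin_simple_X_pow_sub_C hn.pos hζ hβ
  have hgen : AdjoinSimple.gen K β ^ n = algebraMap K K⟮β⟯ b := Subtype.ext hβ
  refine (linearDisjoint_adjoin_simple_of_irreducible_X_pow_sub_C hα ?_).inf_eq_bot
  refine X_pow_sub_C_irreducible_of_odd hn fun p hp hpn x hx ↦ ?_
  obtain ⟨c, j, hc⟩ := exists_pow_eq_mul_pow_of_pow_eq_algebraMap hpn hirr hζ hgen hx
  exact (hind p hp hpn).pow_ne_mul_pow hp.ne_one c j hc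

theorem radical_extensions_intersection_general {k E : Type*} [Field k] [Field E] [Algebra k E]
    {n : ℕ} (hn : Odd n) (hk : ∀ ω : k, ω ^ n = 1 → ω = 1) {a b : k}
    (hind : ∀ p, p.Prime → p ∣ n → IndepModPow p a b) {ζ α β : E} (hζ : IsPrimitiveRoot ζ n)
    (hα : α ^ n = algebraMap k E a) (hβ : β ^ n = algebraMap k E b) :
    adjoin k {ζ, α} ⊓ adjoin k {ζ, β} = k⟮ζ⟯ := by
  have : NeZero n := ⟨hn.pos.ne'⟩
  have := isAbelianGalois_adjoin_of_isPrimitiveRoot (k := k) hζ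
  have hζK : IsPrimitiveRoot (AdjoinSimple.gen k ζ) n :=
    .of_map_of_injective (f := algebraMap k⟮ζ⟯ E) hζ (algebraMap k⟮ζ⟯ E).injective
  have hindK (p : ℕ) (hp : p.Prime) (hpn : p ∣ n) :
      IndepModPow p (algebraMap k k⟮ζ⟯ a) (algebraMap k k⟮ζ⟯ b) :=
    (hind p hp hpn).map_algebraMap hp fun ω hω ↦
      hk ω (orderOf_dvd_iff_pow_eq_one.1 ((orderOf_dvd_of_pow_eq_one hω).trans hpn))
  have hbot : k⟮ζ⟯⟮α⟯ ⊓ k⟮ζ⟯⟮β⟯ = ⊥ := adjoin_root_inf_adjoin_root_eq_bot hn hζK hindK hα hβ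
  rw [← adjoin_simple_adjoin_simple, ← adjoin_simple_adjoin_simple,
    IntermediateField.restrictScalars_inf, hbot, restrictScalars_bot_eq_self]

/-- Let `p` be an odd prime, `r ≥ 1`, and `l₁`, `l₂` nonzero integers that are
multiplicatively independent modulo `p`-th powers in `ℚ×`. If `ζ ∈ ℂ` is a primitive
`p^r`-th root of unity and `α₁`, `α₂ ∈ ℂ` are roots of `X^(p^r) - l₁` and
`X^(p^r) - l₂`, then `ℚ(ζ, α₁) ∩ ℚ(ζ, α₂) = ℚ(ζ)`. -/
theorem radical_extensions_intersection
    (p : ℕ) (hp : Nat.Prime p) (hodd : Odd p) (r : ℕ) (hr : 1 ≤ r)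
    (l₁ l₂ : ℤ) (hl₁ : l₁ ≠ 0) (hl₂ : l₂ ≠ 0)
    (hind : ∀ i j : ℤ, (∃ q : ℚ, q ^ p = (l₁ : ℚ) ^ i * (l₂ : ℚ) ^ j) →
      (p : ℤ) ∣ i ∧ (p : ℤ) ∣ j)
    (ζ α₁ α₂ : ℂ) (hζ : IsPrimitiveRoot ζ (p ^ r))
    (hα₁ : α₁ ^ (p ^ r) = (l₁ : ℂ)) (hα₂ : α₂ ^ (p ^ r) = (l₂ : ℂ)) :
    IntermediateField.adjoin ℚ ({ζ, α₁} : Set ℂ) ⊓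
        IntermediateField.adjoin ℚ ({ζ, α₂} : Set ℂ)
      = IntermediateField.adjoin ℚ ({ζ} : Set ℂ) := by
  have hroots (ω : ℚ) (hω : ω ^ p ^ r = 1) : ω = 1 :=
    hodd.pow.strictMono_pow.injective (hω.trans (one_pow _).symm)
  have hind' (q : ℕ) (hq : q.Prime) (hqp : q ∣ p ^ r) : IndepModPow q (l₁ : ℚ) (l₂ : ℚ) :=
    (Nat.prime_dvd_prime_iff_eq hq hp).1 (hq.dvd_of_dvd_pow hqp) ▸ hind
  exact radical_extensions_intersection_general hodd.pow hroots hind' hζ (by simpa) (by simpa)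
end

section
/- Let G be the binary recurrence sequence with parameters A = 1, B = 2 and initial values G_0 = 2, G_1 = 5 (so G_{n+2} = G_{n+1} + 2·G_n). Then for every prime q ∈ {3, 5, 7, 11, 13, 17}, the sequence contains no q-th powers: there are no n ≥ 0 and x ∈ ℤ with G_n = x^q. -/
/-!
By Fermat's little theorem, a `q`-th power `y` satisfies `y ^ ((p - 1) / q + 1) ≡ y` modulo every
prime `p ≡ 1 [MOD q]`. The characteristic roots of the recurrence are `2` and `-1`, so modulo a
prime `p ≠ 3` dividing `2 ^ M - 1` with `M` even, the sequence repeats after `M` steps. For each `q`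
there is a small even multiple `M` of `q` such that every residue class of `n` modulo `M` violates
the congruence for some prime factor `p ≡ 1 [MOD q]` of `2 ^ M - 1`.
-/

/-- The binary recurrence sequence `G 0 = u`, `G 1 = v`, `G (n + 2) = A * G (n + 1) + B * G n`,
over an arbitrary semiring so that the integer sequence and its reductions modulo `m` are both
instances. Structural recursion lets the kernel evaluate its terms. -/
def binaryRecurrence {R : Type*} [Semiring R] (A B u v : R) : ℕ → R
  | 0 => u
  | 1 => v
  | n + 2 => A * binaryRecurrence A B u v (n + 1) + B * binaryRecurrence A B u v n

namespace binaryRecurrence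

section Semiring

variable {R S : Type*} [Semiring R] [Semiring S] {A B u v : R}

theorem eq_of_recurrence {G : ℕ → R} (h0 : G 0 = u) (h1 : G 1 = v)
    (hrec : ∀ n, G (n + 2) = A * G (n + 1) + B * G n) : G = binaryRecurrence A B u v := by
  funext n
  induction n using Nat.twoStepInduction with
  | zero => exact h0
  | one => exact h1
  | more n ih ih' => rw [hrec, ih, ih', binaryRecurrence]

theorem map (f : R →+* S) (n : ℕ) :
    f (binaryRecurrence A B u v n) = binaryRecurrence (f A) (f B) (f u) (f v) n :=
  congrFun (eq_of_recurrence (G := fun n ↦ f (binaryRecurrence A B u v n)) rfl rfl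
    fun n ↦ by simp only [binaryRecurrence, map_add, map_mul]) n

theorem periodic {M : ℕ} (h0 : binaryRecurrence A B u v M = u)
    (h1 : binaryRecurrence A B u v (M + 1) = v) :
    Function.Periodic (binaryRecurrence A B u v) M :=
  congrFun (eq_of_recurrence (G := fun n ↦ binaryRecurrence A B u v (n + M))
    (by rwa [zero_add]) (by rwa [add_comm])
    fun n ↦ by rw [add_right_comm, binaryRecurrence, add_right_comm])

end Semiring

theorem mod_modEq {A B u v : ℤ} {M m : ℕ} (h0 : binaryRecurrence A B u v M ≡ u [ZMOD m])
    (h1 : binaryRecurrence A B u v (M + 1) ≡ v [ZMOD m]) (n : ℕ) :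
    binaryRecurrence A B u v (n % M) ≡ binaryRecurrence A B u v n [ZMOD m] := by
  have cast_eq (k : ℕ) : ((binaryRecurrence A B u v k : ℤ) : ZMod m) =
      binaryRecurrence (A : ZMod m) B u v k := map (Int.castRingHom (ZMod m)) k
  simp only [← ZMod.intCast_eq_intCast_iff, cast_eq] at h0 h1 ⊢
  exact (periodic h0 h1).map_mod_nat n

end binaryRecurrence

theorem pow_pow_div_add_one_modEq {p q : ℕ} (hp : p.Prime) (hq : q ∣ p - 1) (x : ℤ) :
    (x ^ q) ^ ((p - 1) / q + 1) ≡ x ^ q [ZMOD p] := by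
  have : Fact p.Prime := ⟨hp⟩
  have hq0 : q ≠ 0 := ne_zero_of_dvd_ne_zero (Nat.sub_ne_zero_of_lt hp.one_lt) hq
  rw [← ZMod.intCast_eq_intCast_iff, pow_succ, ← pow_mul, Nat.mul_div_cancel' hq]
  push_cast
  obtain hx | hx := eq_or_ne (x : ZMod p) 0
  · rw [hx, zero_pow hq0, mul_zero]
  · rw [ZMod.pow_card_sub_one_eq_one hx, one_mul]

theorem binaryRecurrence_ne_pow_of_sieve {A B u v : ℤ} {q : ℕ} (M : ℕ) [NeZero M] (P : Finset ℕ)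
    (hprime : ∀ p ∈ P, p.Prime) (hdvd : ∀ p ∈ P, q ∣ p - 1)
    (hperiod : ∀ p ∈ P, binaryRecurrence A B u v M ≡ u [ZMOD p] ∧
      binaryRecurrence A B u v (M + 1) ≡ v [ZMOD p])
    (hsieve : ∀ r < M, ∃ p ∈ P, ¬ binaryRecurrence A B u v r ^ ((p - 1) / q + 1) ≡
      binaryRecurrence A B u v r [ZMOD p])
    (n : ℕ) (x : ℤ) : binaryRecurrence A B u v n ≠ x ^ q := by
  intro hx
  obtain ⟨p, hpP, hp⟩ := hsieve (n % M) (n.mod_lt (NeZero.pos M))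
  have hr : binaryRecurrence A B u v (n % M) ≡ x ^ q [ZMOD p] :=
    hx ▸ binaryRecurrence.mod_modEq (hperiod p hpP).1 (hperiod p hpP).2 n
  have hpow := pow_pow_div_add_one_modEq (hprime p hpP) (hdvd p hpP) x
  exact hp <| (hr.pow _).trans <| hpow.trans hr.symm

/-- The binary recurrence sequence with `G 0 = 2`, `G 1 = 5` and
`G (n+2) = G (n + 1) + 2 * G n` contains no `q`-th powers for any prime
`q ∈ {3, 5, 7, 11, 13, 17}`. -/
theorem no_powers_A1_B2_u2_v5
    (G : ℕ → ℤ) (hG0 : G 0 = 2) (hG1 : G 1 = 5)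
    (hGrec : ∀ n : ℕ, G (n + 2) = G (n + 1) + 2 * G n) :
    ∀ q ∈ ({3, 5, 7, 11, 13, 17} : Finset ℕ), Nat.Prime q →
      ¬ ∃ (n : ℕ) (x : ℤ), G n = x ^ q := by
  have hG : G = binaryRecurrence 1 2 2 5 :=
    binaryRecurrence.eq_of_recurrence hG0 hG1 fun n ↦ by rw [hGrec, one_mul]
  rintro q hq -
  simp only [Finset.mem_insert, Finset.mem_singleton] at hq
  simp only [not_exists, hG]
  rcases hq with rfl | rfl | rfl | rfl | rfl | rfl
  · exact binaryRecurrence_ne_pow_of_sieve 6 {7}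
      (by norm_num) (by decide) (by decide +kernel) (by decide +kernel)
  · exact binaryRecurrence_ne_pow_of_sieve 10 {11}
      (by norm_num) (by decide) (by decide +kernel) (by decide +kernel)
  · exact binaryRecurrence_ne_pow_of_sieve 42 {43, 127, 337}
      (by norm_num) (by decide) (by decide +kernel) (by decide +kernel)
  · exact binaryRecurrence_ne_pow_of_sieve 22 {23, 89}
      (by norm_num) (by decide) (by decide +kernel) (by decide +kernel)
  · exact binaryRecurrence_ne_pow_of_sieve 26 {2731}
      (by norm_num) (by decide) (by decide +kernel) (by decide +kernel)
  · exact binaryRecurrence_ne_pow_of_sieve 34 {43691, 131071}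
      (by norm_num) (by decide) (by decide +kernel) (by decide +kernel)
end
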